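/- (Corollary 3.3: excess error bound for the single-stage logistic surrogate.) Let ℓ_log(s,j) = log₂(Σ_{k=0}^{n_e} e^{s_k − s_j}) be the multinomial logistic loss on score vectors. Then for every probability measure μ on X×ℝ, every measurable predictor h : X → ℝ and every measurable deferral function r : X → ℝ^{n_e+1}, E_{L_def}(h,r) − E*_{L_def} ≤ Γ̄(E_{L_{ℓ_log}}(h,r) − E*_{L_{ℓ_log}}), where Γ̄(t) = max{ t, √(2·n_e)·(l̄ + Σ_{j=1}^{n_e} C_j)^{1/2}·t^{1/2} } and L_{ℓ_log} is the single-stage surrogate built from ℓ_log. -/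

import Mathlib

open MeasureTheory Finset ENNReal

variable {X : Type*}

/-- The deferral loss `L_def(h,r,x,y)`. -/
noncomputable def defLoss (nE : ℕ) (L : ℝ → ℝ → ℝ) (c : Fin nE → X × ℝ → ℝ)
    (sel : (Fin (nE + 1) → ℝ) → Fin (nE + 1))
    (h : X → ℝ) (r : X → Fin (nE + 1) → ℝ) (z : X × ℝ) : ℝ :=
  (if sel (r z.1) = 0 then L (h z.1) z.2 else 0)
    + ∑ j : Fin nE, if sel (r z.1) = j.succ then c j z else 0

/-- The single-stage surrogate loss `L_ℓ(h,r,x,y)`. -/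
noncomputable def surLoss (nE : ℕ) (L : ℝ → ℝ → ℝ) (c : Fin nE → X × ℝ → ℝ)
    (ℓ : (Fin (nE + 1) → ℝ) → Fin (nE + 1) → ℝ)
    (h : X → ℝ) (r : X → Fin (nE + 1) → ℝ) (z : X × ℝ) : ℝ :=
  (∑ j, c j z) * ℓ (r z.1) 0
    + ∑ j : Fin nE, (L (h z.1) z.2 + ∑ j' ∈ univ.erase j, c j' z) * ℓ (r z.1) j.succ
    - ((nE : ℝ) - 1) * L (h z.1) z.2

/-- The two-stage surrogate loss `L^h_ℓ(r,x,y)` (no `−(n_e−1)L` term). -/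
noncomputable def surLossTS (nE : ℕ) (L : ℝ → ℝ → ℝ) (c : Fin nE → X × ℝ → ℝ)
    (ℓ : (Fin (nE + 1) → ℝ) → Fin (nE + 1) → ℝ)
    (h : X → ℝ) (r : X → Fin (nE + 1) → ℝ) (z : X × ℝ) : ℝ :=
  (∑ j, c j z) * ℓ (r z.1) 0
    + ∑ j : Fin nE, (L (h z.1) z.2 + ∑ j' ∈ univ.erase j, c j' z) * ℓ (r z.1) j.succ

/-- Generalization error of a nonnegative loss, as a Lebesgue integral in `[0,∞]`. -/
noncomputable def genErr {W : Type*} [MeasurableSpace W] (μ : Measure W) (f : W → ℝ) : ℝ≥0∞ :=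
  ∫⁻ w, ENNReal.ofReal (f w) ∂μ

variable [MeasurableSpace X]

/-- Multi-class zero-one generalization error `E_{ℓ01}(r)`. -/
noncomputable def E01 (nE : ℕ) (sel : (Fin (nE + 1) → ℝ) → Fin (nE + 1))
    (ν : Measure (X × Fin (nE + 1))) (r : X → Fin (nE + 1) → ℝ) : ℝ≥0∞ :=
  ν {z | sel (r z.1) ≠ z.2}

/-- Multi-class surrogate generalization error `E_ℓ(r)`. -/
noncomputable def Eell (nE : ℕ) (ℓ : (Fin (nE + 1) → ℝ) → Fin (nE + 1) → ℝ)
    (ν : Measure (X × Fin (nE + 1))) (r : X → Fin (nE + 1) → ℝ) : ℝ≥0∞ :=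
  ∫⁻ z, ENNReal.ofReal (ℓ (r z.1) z.2) ∂ν

/-- The multinomial logistic loss `ℓ_log(s,j) = log₂(Σ_k e^{s_k − s_j})` on score vectors. -/
noncomputable def ellLog (nE : ℕ) (s : Fin (nE + 1) → ℝ) (j : Fin (nE + 1)) : ℝ :=
  Real.logb 2 (∑ k, Real.exp (s k - s j))

open MeasureTheory Finset ENNReal ProbabilityTheory

/-- Pointwise surrogate value for a cost vector `v` and scores `s`. -/
noncomputable def SV (nE : ℕ) (v s : Fin (nE + 1) → ℝ) : ℝ :=
  ∑ j, ((∑ i, v i) - v j) * ellLog nE s j - ((nE : ℝ) - 1) * v 0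

lemma surLoss_eq_SV {X : Type*} (nE : ℕ) (L : ℝ → ℝ → ℝ) (c : Fin nE → X × ℝ → ℝ)
    (h : X → ℝ) (r : X → Fin (nE + 1) → ℝ) (z : X × ℝ) :
    surLoss nE L c (ellLog nE) h r z =
      SV nE (Fin.cons (L (h z.1) z.2) (fun j => c j z)) (r z.1) := by
  unfold surLoss SV
  rw [Fin.sum_univ_succ (n := nE) (f := fun j => (_ - _) * _)]
  simp only [Fin.sum_univ_succ, Fin.cons_zero, Fin.cons_succ, add_sub_cancel_left]
  congr 2
  refine Finset.sum_congr rfl fun j _ => ?_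
  congr 1
  rw [← Finset.add_sum_erase univ (fun j => c j z) (Finset.mem_univ j)]
  ring

lemma defLoss_eq_V {X : Type*} (nE : ℕ) (L : ℝ → ℝ → ℝ) (c : Fin nE → X × ℝ → ℝ)
    (sel : (Fin (nE + 1) → ℝ) → Fin (nE + 1))
    (h : X → ℝ) (r : X → Fin (nE + 1) → ℝ) (z : X × ℝ) :
    defLoss nE L c sel h r z =
      (Fin.cons (L (h z.1) z.2) (fun j => c j z) : Fin (nE + 1) → ℝ) (sel (r z.1)) := by
  unfold defLoss
  generalize sel (r z.1) = k
  induction k using Fin.cases with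
  | zero => simp [(Fin.succ_ne_zero _).symm]
  | succ i => simp [Fin.succ_ne_zero]

lemma SV_eq (nE : ℕ) (v s : Fin (nE + 1) → ℝ) :
    SV nE v s = v 0 * ((∑ j : Fin nE, ellLog nE s j.succ) - ((nE : ℝ) - 1))
      + ∑ i : Fin nE, v i.succ * ((∑ j, ellLog nE s j) - ellLog nE s i.succ) := by
  have h1 : ∑ j, ((∑ i, v i) - v j) * ellLog nE s j
      = ∑ i, v i * ((∑ j, ellLog nE s j) - ellLog nE s i) := by
    simp only [sub_mul, mul_sub, Finset.sum_sub_distrib, ← Finset.mul_sum, ← Finset.sum_mul]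
  unfold SV
  rw [h1, Fin.sum_univ_succ]
  have : (∑ j, ellLog nE s j) - ellLog nE s 0 = ∑ j : Fin nE, ellLog nE s j.succ := by
    rw [Fin.sum_univ_succ]; ring
  rw [this]; ring

lemma ellLog_eq (nE : ℕ) (s : Fin (nE + 1) → ℝ) (j) :
    ellLog nE s j = (Real.log (∑ k, Real.exp (s k)) - s j) / Real.log 2 := by
  unfold ellLog Real.logb
  have : ∑ k, Real.exp (s k - s j) = (∑ k, Real.exp (s k)) * Real.exp (- s j) := by
    rw [Finset.sum_mul]; simp [← Real.exp_add, sub_eq_add_neg]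
  rw [this, Real.log_mul _ (Real.exp_ne_zero _), Real.log_exp]
  · ring
  · exact (Finset.sum_pos (fun _ _ => Real.exp_pos _) ⟨0, by simp⟩).ne'

lemma ellLog_nonneg (nE : ℕ) (s : Fin (nE + 1) → ℝ) (j) : 0 ≤ ellLog nE s j := by
  refine Real.logb_nonneg (by norm_num) ?_
  have := Finset.single_le_sum (f := fun k => Real.exp (s k - s j))
    (fun _ _ => (Real.exp_pos _).le) (Finset.mem_univ j)
  simpa using this

lemma one_le_ellLog (nE : ℕ) (s : Fin (nE + 1) → ℝ) (j k) (hjk : j ≠ k) (hs : s j ≤ s k) :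
    1 ≤ ellLog nE s j := by
  unfold ellLog
  rw [Real.le_logb_iff_rpow_le (by norm_num)]
  · have h1 := Finset.sum_le_sum_of_subset_of_nonneg (f := fun k => Real.exp (s k - s j))
      (Finset.subset_univ {j, k}) (fun _ _ _ => (Real.exp_pos _).le)
    rw [Finset.sum_pair hjk] at h1
    have : 1 ≤ Real.exp (s k - s j) := Real.one_le_exp (by linarith)
    simp at h1 ⊢
    linarith
  · exact (Finset.sum_pos (fun _ _ => Real.exp_pos _) ⟨0, by simp⟩)

lemma coef_zero (nE : ℕ) (s : Fin (nE + 1) → ℝ) (hs : ∀ j, s j ≤ s 0) :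
    1 ≤ (∑ j : Fin nE, ellLog nE s j.succ) - ((nE : ℝ) - 1) := by
  have : ∑ j : Fin nE, (1 : ℝ) ≤ ∑ j : Fin nE, ellLog nE s j.succ :=
    Finset.sum_le_sum fun j _ => one_le_ellLog nE s _ 0 (Fin.succ_ne_zero j) (hs _)
  simp at this
  linarith

lemma coef_nonneg (nE : ℕ) (s : Fin (nE + 1) → ℝ) :
    0 ≤ (∑ j : Fin nE, ellLog nE s j.succ) - ((nE : ℝ) - 1) := by
  obtain ⟨k, hk⟩ := Finite.exists_max s
  induction k using Fin.cases with
  | zero => linarith [coef_zero nE s hk]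
  | succ i =>
    have : ∑ j : Fin nE, (if j = i then (0 : ℝ) else 1) ≤ ∑ j : Fin nE, ellLog nE s j.succ := by
      refine Finset.sum_le_sum fun j _ => ?_
      split_ifs with hj
      · exact ellLog_nonneg _ _ _
      · exact one_le_ellLog nE s _ i.succ (by simpa using hj) (hk _)
    have h2 : ∑ j : Fin nE, (if j = i then (0 : ℝ) else 1) = nE - 1 := by
      have : ∀ j : Fin nE, (if j = i then (0 : ℝ) else 1) = 1 - if j = i then 1 else 0 := by
        intro j; split_ifs <;> simp
      simp [this]
    linarith

lemma SV_nonneg (nE : ℕ) (v s : Fin (nE + 1) → ℝ) (hv : ∀ i, 0 ≤ v i) : 0 ≤ SV nE v s := by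
  rw [SV_eq]
  refine add_nonneg (mul_nonneg (hv _) (coef_nonneg _ _))
    (Finset.sum_nonneg fun i _ => mul_nonneg (hv _) ?_)
  have := Finset.single_le_sum (f := fun k => ellLog nE s k)
    (fun _ _ => ellLog_nonneg _ _ _) (Finset.mem_univ i.succ)
  simpa using this

lemma SV_sub (nE : ℕ) (v v' s : Fin (nE + 1) → ℝ) (hv : ∀ i : Fin nE, v i.succ = v' i.succ) :
    SV nE v s - SV nE v' s =
      (v 0 - v' 0) * ((∑ j : Fin nE, ellLog nE s j.succ) - ((nE : ℝ) - 1)) := by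
  simp only [SV_eq, hv]; ring

lemma log_scalar (δ : ℝ) (h0 : 0 ≤ δ) (h1 : δ ≤ 1) :
    Real.log 2 * δ ^ 2 ≤
      (1 + δ) * Real.log (1 + δ / 2) + (1 - δ) * Real.log (1 - δ / 2) := by
  have a1 : δ ≤ Real.log (1 + δ / 2) - Real.log (1 - δ / 2) := by
    have := Real.sum_range_le_log_div (x := δ / 2) (by linarith) (by linarith) 1
    rw [Real.log_div (by linarith) (by linarith)] at this
    simp at this
    linarith
  have a2 : δ ^ 2 * Real.log (3 / 4) ≤ Real.log (1 + δ / 2) + Real.log (1 - δ / 2) := by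
    rw [← Real.log_mul (by linarith) (by linarith)]
    have := (show ConcaveOn ℝ (Set.Ioi 0) Real.log from strictConcaveOn_log_Ioi.concaveOn).2
      (show (1 : ℝ) ∈ Set.Ioi 0 by norm_num) (show (3 / 4 : ℝ) ∈ Set.Ioi 0 by norm_num)
      (show 0 ≤ 1 - δ ^ 2 by nlinarith) (show 0 ≤ δ ^ 2 by positivity) (by ring)
    simp only [smul_eq_mul, Real.log_one, mul_zero, zero_add] at this
    refine this.trans (le_of_eq ?_)
    congr 1; ring
  have a3 : Real.log 2 ≤ 1 + Real.log (3 / 4) := by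
    have e1 : Real.log 2 - Real.log (3 / 4) = Real.log (8 / 3) := by
      rw [← Real.log_div (by norm_num) (by norm_num)]; norm_num
    have : Real.log (8 / 3) ≤ 1 := by
      rw [Real.log_le_iff_le_exp (by norm_num)]
      have := Real.exp_one_gt_d9
      linarith
    linarith
  nlinarith [mul_le_mul_of_nonneg_left a1 h0, mul_le_mul_of_nonneg_right a3 (sq_nonneg δ)]

/-- Modified scores. -/
noncomputable def modS (nE : ℕ) (s : Fin (nE + 1) → ℝ) (k m : Fin (nE + 1)) (θ : ℝ) :
    Fin (nE + 1) → ℝ := fun i =>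
  if i = m then Real.log ((Real.exp (s k) + Real.exp (s m)) / 2 * (1 + θ))
  else if i = k then Real.log ((Real.exp (s k) + Real.exp (s m)) / 2 * (1 - θ))
  else s i

lemma sum_modS (nE : ℕ) (s : Fin (nE + 1) → ℝ) (k m : Fin (nE + 1)) (hkm : k ≠ m) (θ : ℝ)
    (h0 : 0 ≤ θ) (h1 : θ ≤ 1 / 2) :
    ∑ i, Real.exp (modS nE s k m θ i) = ∑ i, Real.exp (s i) := by
  have e1 := Real.exp_pos (s k)
  have e2 := Real.exp_pos (s m)
  rw [← sub_eq_zero, ← Finset.sum_sub_distrib, ← Finset.sum_subset (Finset.subset_univ {k, m}),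
    Finset.sum_pair hkm]
  · simp only [modS, hkm, if_true, if_false]
    rw [Real.exp_log (by apply _root_.mul_pos <;> linarith), Real.exp_log (by apply _root_.mul_pos <;> linarith)]
    ring
  · intro i _ hi
    simp only [Finset.mem_insert, Finset.mem_singleton, not_or] at hi
    simp [modS, hi.1, hi.2]

lemma two_stage (nE : ℕ) (v s : Fin (nE + 1) → ℝ) (hv : ∀ i, 0 ≤ v i) (k m : Fin (nE + 1))
    (hkm : k ≠ m) (hs : ∀ j, s j ≤ s k) (hlt : v m < v k) (M : ℝ) (hM : ∑ i, v i ≤ M) :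
    (v k - v m) ^ 2 ≤ 2 * nE * M * (SV nE v s -
      SV nE v (modS nE s k m ((v k - v m) / (2 * (∑ i, v i) - v k - v m) / 2))) := by
  set S := ∑ i, v i with hS
  set u := 2 * S - v k - v m with hu
  have hw : ∀ j, 0 ≤ S - v j := fun j => by
    have := Finset.single_le_sum (f := v) (fun i _ => hv i) (Finset.mem_univ j)
    linarith
  have hpair : v k + v m ≤ S := by
    have h1 := Finset.sum_le_sum_of_subset_of_nonneg (f := v)
      (Finset.subset_univ {k, m}) (fun i _ _ => hv i)
    rwa [Finset.sum_pair hkm] at h1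
  have hupos : 0 < u := by linarith [hv m]
  have huS : u ≤ nE * S := by
    have h1 := Finset.sum_le_sum_of_subset_of_nonneg (f := fun j => S - v j)
      (Finset.subset_univ {k, m}) (fun i _ _ => hw i)
    rw [Finset.sum_pair hkm, Finset.sum_sub_distrib, ← hS] at h1
    simp at h1
    linarith
  have huM : u ≤ nE * M := huS.trans (by gcongr)
  set δ := (v k - v m) / u with hδ
  have hδu : δ * u = v k - v m := by rw [hδ]; field_simp
  have hδ0 : 0 ≤ δ := div_nonneg (by linarith) hupos.le
  have hδ1 : δ ≤ 1 := by rw [hδ, div_le_one hupos]; linarith [hw k]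
  have key := log_scalar δ hδ0 hδ1
  have l2 : 0 < Real.log 2 := Real.log_pos (by norm_num)
  have e1 := Real.exp_pos (s k)
  have e2 := Real.exp_pos (s m)
  set σ := (Real.exp (s k) + Real.exp (s m)) / 2 with hσ
  have hσ0 : 0 < σ := by positivity
  have hm1 : s m ≤ Real.log σ := by
    rw [Real.le_log_iff_exp_le hσ0]
    have := Real.exp_le_exp.2 (hs m)
    linarith
  have hm2 : s m + s k ≤ 2 * Real.log σ := by
    have : Real.exp ((s m + s k) / 2) ≤ σ := by
      have q1 : Real.exp (s k) = Real.exp (s k / 2) ^ 2 := by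
        rw [← Real.exp_nat_mul]; congr 1; push_cast; ring
      have q2 : Real.exp (s m) = Real.exp (s m / 2) ^ 2 := by
        rw [← Real.exp_nat_mul]; congr 1; push_cast; ring
      rw [hσ, add_div, Real.exp_add, q1, q2]
      nlinarith [sq_nonneg (Real.exp (s k / 2) - Real.exp (s m / 2))]
    rw [← Real.le_log_iff_exp_le hσ0] at this
    linarith
  have hdiff : SV nE v s - SV nE v (modS nE s k m (δ / 2)) =
      ((S - v m) * (Real.log σ + Real.log (1 + δ / 2) - s m) +
        (S - v k) * (Real.log σ + Real.log (1 - δ / 2) - s k)) / Real.log 2 := by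
    unfold SV
    rw [sub_sub_sub_cancel_right, ← Finset.sum_sub_distrib]
    simp only [ellLog_eq, sum_modS nE s k m hkm (δ / 2) (by linarith) (by linarith)]
    rw [← Finset.sum_subset (Finset.subset_univ {k, m}), Finset.sum_pair hkm]
    · simp only [modS, hkm, if_true, if_false]
      rw [← hσ, Real.log_mul hσ0.ne' (by linarith), Real.log_mul hσ0.ne' (by linarith)]
      ring
    · intro i _ hi
      simp only [Finset.mem_insert, Finset.mem_singleton, not_or] at hi
      simp [modS, hi.1, hi.2]
  have hlow : δ * (v k - v m) / 2 ≤ SV nE v s - SV nE v (modS nE s k m (δ / 2)) := by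
    rw [hdiff, le_div_iff₀ l2]
    have w1 : S - v m = u / 2 * (1 + δ) := by linear_combination (1 / 2) * hu - (1 / 2) * hδu
    have w2 : S - v k = u / 2 * (1 - δ) := by linear_combination (1 / 2) * hu + (1 / 2) * hδu
    have z1 : 0 ≤ (S - v m) * (Real.log σ - s m) + (S - v k) * (Real.log σ - s k) := by
      nlinarith [mul_nonneg (hw k) (sub_nonneg.2 hm2),
        mul_nonneg (sub_nonneg.2 hlt.le) (sub_nonneg.2 hm1)]
    have z2 : δ * (v k - v m) / 2 * Real.log 2 ≤
        (S - v m) * Real.log (1 + δ / 2) + (S - v k) * Real.log (1 - δ / 2) := by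
      rw [w1, w2, ← hδu]
      nlinarith [mul_le_mul_of_nonneg_left key (half_pos hupos).le]
    linarith
  have hM0 : 0 ≤ nE * M := hupos.le.trans huM
  have hd : 0 ≤ δ * (v k - v m) / 2 := by
    have := mul_nonneg hδ0 (sub_nonneg.2 hlt.le); linarith
  calc (v k - v m) ^ 2 = 2 * u * (δ * (v k - v m) / 2) := by rw [← hδu]; ring
    _ ≤ 2 * (nE * M) * (δ * (v k - v m) / 2) := by gcongr
    _ ≤ 2 * (nE * M) * (SV nE v s - SV nE v (modS nE s k m (δ / 2))) := by gcongr
    _ = _ := by ring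

/-- Improved scores. -/
noncomputable def impS (nE : ℕ) (v s : Fin (nE + 1) → ℝ) (k m : Fin (nE + 1)) :
    Fin (nE + 1) → ℝ :=
  if k ≠ m ∧ v m < v k then
    modS nE s k m ((v k - v m) / (2 * (∑ i, v i) - v k - v m) / 2) else s

lemma impS_spec (nE : ℕ) (v s : Fin (nE + 1) → ℝ) (hv : ∀ i, 0 ≤ v i) (k m : Fin (nE + 1))
    (hs : ∀ j, s j ≤ s k) (M : ℝ) (hM : ∑ i, v i ≤ M) :
    0 ≤ SV nE v s - SV nE v (impS nE v s k m) ∧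
    (v m < v k → (v k - v m) ^ 2 ≤ 2 * nE * M * (SV nE v s - SV nE v (impS nE v s k m))) := by
  unfold impS
  have hM0 : 0 ≤ M := (Finset.sum_nonneg fun i _ => hv i).trans hM
  split_ifs with hc
  · have := two_stage nE v s hv k m hc.1 hs hc.2 M hM
    refine ⟨?_, fun _ => this⟩
    have h1 : 0 < (v k - v m) ^ 2 := by have := sub_pos.2 hc.2; positivity
    exact (pos_of_mul_pos_right (h1.trans_le this) (by positivity)).le
  · refine ⟨by simp, fun hlt => absurd ⟨?_, hlt⟩ hc⟩
    rintro rfl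
    exact lt_irrefl _ hlt

lemma pointwise_bound (nE : ℕ) (hnE : 1 ≤ nE) (v v' v'' s : Fin (nE + 1) → ℝ)
    (hv : ∀ i, 0 ≤ v i) (hv' : ∀ i, 0 ≤ v' i) (hvv : ∀ i : Fin nE, v i.succ = v' i.succ)
    (k m : Fin (nE + 1)) (hs : ∀ j, s j ≤ s k)
    (hv'' : v'' = if m = 0 ∧ v' 0 < v 0 then v' else v) (M : ℝ)
    (hM : ∑ i, v i ≤ M) (hM' : ∑ i, v' i ≤ M) :
    0 ≤ SV nE v s - SV nE v'' (impS nE v'' s k m) ∧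
    v k - v' m ≤ Real.sqrt (2 * nE * M * (SV nE v s - SV nE v'' (impS nE v'' s k m))) := by
  have hM0 : 0 ≤ M := (Finset.sum_nonneg fun i _ => hv i).trans hM
  have hn1 : (1 : ℝ) ≤ nE := by exact_mod_cast hnE
  by_cases hc : m = 0 ∧ v' 0 < v 0
  · rw [if_pos hc] at hv''
    subst hv''
    obtain ⟨rfl, hlt⟩ := hc
    obtain ⟨p1, p2⟩ := impS_spec nE v'' s hv' k 0 hs M hM'
    have hsub := SV_sub nE v v'' s hvv
    have hc0 := coef_nonneg nE s
    have hD1 : 0 ≤ SV nE v s - SV nE v'' s := by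
      rw [hsub]; exact mul_nonneg (by linarith) hc0
    refine ⟨by linarith, ?_⟩
    by_cases hk : k = 0
    · subst hk
      have hc1 := coef_zero nE s hs
      have hD : v 0 - v'' 0 ≤ SV nE v s - SV nE v'' s := by
        rw [hsub]; nlinarith
      have hvM : v 0 ≤ M :=
        (Finset.single_le_sum (f := v) (fun i _ => hv i) (Finset.mem_univ 0)).trans hM
      apply Real.le_sqrt_of_sq_le
      have hd0 : 0 ≤ v 0 - v'' 0 := by linarith
      have h1 : (v 0 - v'' 0) ^ 2 ≤ M * (v 0 - v'' 0) := by
        rw [sq]; exact mul_le_mul_of_nonneg_right (by linarith [hv' 0]) hd0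
      refine h1.trans ?_
      apply mul_le_mul _ (by linarith) hd0 (by positivity)
      nlinarith
    · obtain ⟨i, rfl⟩ := Fin.exists_succ_eq.2 hk
      rw [hvv i]
      by_cases hl : v'' 0 < v'' i.succ
      · apply Real.le_sqrt_of_sq_le
        refine (p2 hl).trans ?_
        gcongr
        linarith
      · exact le_trans (by linarith) (Real.sqrt_nonneg _)
  · rw [if_neg hc] at hv''
    subst hv''
    obtain ⟨p1, p2⟩ := impS_spec nE v'' s hv k m hs M hM
    refine ⟨p1, ?_⟩
    have hm : v'' m ≤ v' m := by
      by_cases hm0 : m = 0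
      · subst hm0
        by_contra hcon
        exact hc ⟨rfl, by linarith⟩
      · obtain ⟨i, rfl⟩ := Fin.exists_succ_eq.2 hm0
        exact (hvv i).le
    by_cases hl : v'' m < v'' k
    · exact le_trans (by linarith) (Real.le_sqrt_of_sq_le (p2 hl))
    · exact le_trans (by linarith) (Real.sqrt_nonneg _)

lemma measurable_eval_fin {X : Type*} [MeasurableSpace X] {N : ℕ} {f : X → Fin N → ℝ}
    {k : X → Fin N} (hf : Measurable f) (hk : Measurable k) : Measurable fun x => f x (k x) := by
  have : (fun x => f x (k x)) = fun x => ∑ j, if k x = j then f x j else 0 := by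
    funext x; simp
  rw [this]
  refine Finset.measurable_sum _ fun j _ => ?_
  exact Measurable.ite (hk (measurableSet_singleton j)) (by fun_prop) measurable_const

lemma measurable_SV {X : Type*} [MeasurableSpace X] (nE : ℕ) {v s : X → Fin (nE + 1) → ℝ}
    (hv : Measurable v) (hs : Measurable s) : Measurable fun x => SV nE (v x) (s x) := by
  unfold SV ellLog Real.logb
  fun_prop

lemma measurable_impS {X : Type*} [MeasurableSpace X] (nE : ℕ) {v s : X → Fin (nE + 1) → ℝ}
    {k m : X → Fin (nE + 1)}
    (hv : Measurable v) (hs : Measurable s) (hk : Measurable k) (hm : Measurable m) :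
    Measurable fun x => impS nE (v x) (s x) (k x) (m x) := by
  unfold impS modS
  have h1 := measurable_eval_fin hv hk
  have h2 := measurable_eval_fin hv hm
  have h3 := measurable_eval_fin hs hk
  have h4 := measurable_eval_fin hs hm
  have h5 : Measurable fun x => ∑ i, v x i := by fun_prop
  have hθ := ((h1.sub h2).div (((h5.const_mul 2).sub h1).sub h2)).div_const 2
  have hσ := (h3.exp.add h4.exp).div_const 2
  refine Measurable.ite ?_ ?_ hs
  · refine MeasurableSet.inter ?_ (measurableSet_lt h2 h1)
    exact (measurableSet_eq_fun hk hm).compl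
  · refine measurable_pi_lambda _ fun i => ?_
    refine Measurable.ite (measurableSet_eq_fun measurable_const hm) (hσ.mul (hθ.const_add 1)).log ?_
    refine Measurable.ite (measurableSet_eq_fun measurable_const hk)
      (hσ.mul (hθ.const_sub 1)).log (by fun_prop)

/-- Conditional mean of the cost vector. -/
noncomputable def Vb {X : Type*} [MeasurableSpace X] (nE : ℕ) (L : ℝ → ℝ → ℝ)
    (c : Fin nE → X × ℝ → ℝ) (κ : Kernel X ℝ) (t : ℝ) (x : X) : Fin (nE + 1) → ℝ :=
  Fin.cons (∫ y, L t y ∂κ x) fun j => ∫ y, c j (x, y) ∂κ x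

lemma genErr_fiber {X : Type*} [MeasurableSpace X] (μ : Measure (X × ℝ)) [IsProbabilityMeasure μ]
    (f : X × ℝ → ℝ) (hf : Measurable f) (h0 : ∀ z, 0 ≤ f z)
    (hi : ∀ x, Integrable (fun y => f (x, y)) (μ.condKernel x)) :
    genErr μ f = ∫⁻ x, ENNReal.ofReal (∫ y, f (x, y) ∂(μ.condKernel x)) ∂μ.fst := by
  unfold genErr
  conv_lhs => rw [← μ.disintegrate μ.condKernel]
  rw [Measure.lintegral_compProd (by fun_prop)]
  refine lintegral_congr fun x => ?_
  rw [ofReal_integral_eq_lintegral_ofReal (hi x) (ae_of_all _ fun y => h0 _)]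

section fiber
set_option linter.unusedSectionVars false
variable {X : Type*} [MeasurableSpace X]
    (nE : ℕ) (lbar : ℝ) (C : Fin nE → ℝ)
    (L : ℝ → ℝ → ℝ) (hLmeas : Measurable fun p : ℝ × ℝ => L p.1 p.2)
    (hL : ∀ y' y, L y' y ∈ Set.Icc 0 lbar)
    (c : Fin nE → X × ℝ → ℝ) (hcmeas : ∀ j, Measurable (c j))
    (hc : ∀ j z, c j z ∈ Set.Ioc 0 (C j))

lemma integrable_cons (κ : Kernel X ℝ) [IsMarkovKernel κ] (t : ℝ) (x : X)
    (hLmeas : Measurable fun p : ℝ × ℝ => L p.1 p.2)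
    (hL : ∀ y' y, L y' y ∈ Set.Icc 0 lbar)
    (hcmeas : ∀ j, Measurable (c j))
    (hc : ∀ j z, c j z ∈ Set.Ioc 0 (C j)) (i : Fin (nE + 1)) :
    Integrable (fun y => (Fin.cons (L t y) (fun j => c j (x, y)) : Fin (nE + 1) → ℝ) i) (κ x) := by
  induction i using Fin.cases with
  | zero =>
    simp only [Fin.cons_zero]
    refine Integrable.of_bound (C := lbar) ?_ (ae_of_all _ fun y => ?_)
    · exact (hLmeas.comp (measurable_const.prodMk measurable_id)).aestronglyMeasurable
    · rw [Real.norm_of_nonneg (hL t y).1]; exact (hL t y).2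
  | succ i =>
    simp only [Fin.cons_succ]
    refine Integrable.of_bound (C := C i) ?_ (ae_of_all _ fun y => ?_)
    · exact ((hcmeas i).comp (measurable_const.prodMk measurable_id)).aestronglyMeasurable
    · rw [Real.norm_of_nonneg (hc i _).1.le]; exact (hc i _).2

lemma Vb_eq (κ : Kernel X ℝ) (t : ℝ) (x : X) (i : Fin (nE + 1)) :
    Vb nE L c κ t x i =
      ∫ y, (Fin.cons (L t y) (fun j => c j (x, y)) : Fin (nE + 1) → ℝ) i ∂κ x := by
  unfold Vb
  induction i using Fin.cases <;> simp

lemma cons_nonneg' (hL : ∀ y' y, L y' y ∈ Set.Icc 0 lbar)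
    (hc : ∀ j z, c j z ∈ Set.Ioc 0 (C j)) (t y : ℝ) (z : X × ℝ) (i : Fin (nE + 1)) :
    0 ≤ (Fin.cons (L t y) (fun j => c j z) : Fin (nE + 1) → ℝ) i := by
  induction i using Fin.cases with
  | zero => exact (hL t y).1
  | succ i => exact (hc i _).1.le

lemma Vb_nonneg (κ : Kernel X ℝ) (hL : ∀ y' y, L y' y ∈ Set.Icc 0 lbar)
    (hc : ∀ j z, c j z ∈ Set.Ioc 0 (C j)) (t : ℝ) (x : X) (i : Fin (nE + 1)) :
    0 ≤ Vb nE L c κ t x i := by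
  rw [Vb_eq]
  exact integral_nonneg fun y => cons_nonneg' nE lbar C L c hL hc t y _ i

lemma Vb_sum_le (κ : Kernel X ℝ) [IsMarkovKernel κ]
    (hLmeas : Measurable fun p : ℝ × ℝ => L p.1 p.2)
    (hL : ∀ y' y, L y' y ∈ Set.Icc 0 lbar)
    (hcmeas : ∀ j, Measurable (c j))
    (hc : ∀ j z, c j z ∈ Set.Ioc 0 (C j)) (t : ℝ) (x : X) :
    ∑ i, Vb nE L c κ t x i ≤ lbar + ∑ j, C j := by
  simp only [Vb_eq]
  rw [← integral_finsetSum _ fun i _ => integrable_cons nE lbar C L c κ t x hLmeas hL hcmeas hc i]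
  have : ∫ y, ∑ i, (Fin.cons (L t y) (fun j => c j (x, y)) : Fin (nE + 1) → ℝ) i ∂κ x
      ≤ ∫ _, (lbar + ∑ j, C j) ∂κ x := by
    refine integral_mono (integrable_finsetSum _ fun i _ =>
      integrable_cons nE lbar C L c κ t x hLmeas hL hcmeas hc i) (integrable_const _) fun y => ?_
    simp only [Fin.sum_univ_succ, Fin.cons_zero, Fin.cons_succ]
    exact add_le_add (hL t y).2 (Finset.sum_le_sum fun j _ => (hc j _).2)
  simpa using this

lemma measurable_Vb (κ : Kernel X ℝ) [IsMarkovKernel κ]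
    (hLmeas : Measurable fun p : ℝ × ℝ => L p.1 p.2)
    (hcmeas : ∀ j, Measurable (c j)) (h : X → ℝ) (hh : Measurable h) :
    Measurable fun x => Vb nE L c κ (h x) x := by
  refine measurable_pi_lambda _ fun i => ?_
  unfold Vb
  induction i using Fin.cases with
  | zero =>
    simp only [Fin.cons_zero]
    have : Measurable fun z : X × ℝ => L (h z.1) z.2 :=
      hLmeas.comp ((hh.comp measurable_fst).prodMk measurable_snd)
    exact (this.stronglyMeasurable.integral_kernel_prod_right' (κ := κ)).measurable
  | succ i =>
    simp only [Fin.cons_succ]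
    exact ((hcmeas i).stronglyMeasurable.integral_kernel_prod_right' (κ := κ)).measurable

lemma measurable_cons (hLmeas : Measurable fun p : ℝ × ℝ => L p.1 p.2)
    (hcmeas : ∀ j, Measurable (c j)) (h : X → ℝ) (hh : Measurable h) :
    Measurable fun z : X × ℝ =>
      (Fin.cons (L (h z.1) z.2) (fun j => c j z) : Fin (nE + 1) → ℝ) := by
  refine measurable_pi_lambda _ fun i => ?_
  induction i using Fin.cases with
  | zero => exact hLmeas.comp ((hh.comp measurable_fst).prodMk measurable_snd)
  | succ i => exact hcmeas i

lemma genErr_def (hLmeas : Measurable fun p : ℝ × ℝ => L p.1 p.2)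
    (hL : ∀ y' y, L y' y ∈ Set.Icc 0 lbar)
    (hcmeas : ∀ j, Measurable (c j))
    (hc : ∀ j z, c j z ∈ Set.Ioc 0 (C j))
    (sel : (Fin (nE + 1) → ℝ) → Fin (nE + 1)) (hselmeas : Measurable sel)
    (μ : Measure (X × ℝ)) [IsProbabilityMeasure μ]
    (h : X → ℝ) (hh : Measurable h) (r : X → Fin (nE + 1) → ℝ) (hr : Measurable r) :
    genErr μ (defLoss nE L c sel h r) =
      ∫⁻ x, ENNReal.ofReal (Vb nE L c μ.condKernel (h x) x (sel (r x))) ∂μ.fst := by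
  have e : defLoss nE L c sel h r = fun z => (Fin.cons (L (h z.1) z.2) (fun j => c j z) :
      Fin (nE + 1) → ℝ) (sel (r z.1)) := funext (defLoss_eq_V nE L c sel h r)
  rw [e, genErr_fiber]
  · simp only [Vb_eq]
  · exact measurable_eval_fin (measurable_cons nE L c hLmeas hcmeas h hh)
      (hselmeas.comp (hr.comp measurable_fst))
  · exact fun z => cons_nonneg' nE lbar C L c hL hc _ _ _ _
  · exact fun x => integrable_cons nE lbar C L c μ.condKernel (h x) x hLmeas hL hcmeas hc
      (sel (r x))

lemma genErr_sur (hLmeas : Measurable fun p : ℝ × ℝ => L p.1 p.2)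
    (hL : ∀ y' y, L y' y ∈ Set.Icc 0 lbar)
    (hcmeas : ∀ j, Measurable (c j))
    (hc : ∀ j z, c j z ∈ Set.Ioc 0 (C j))
    (μ : Measure (X × ℝ)) [IsProbabilityMeasure μ]
    (h : X → ℝ) (hh : Measurable h) (r : X → Fin (nE + 1) → ℝ) (hr : Measurable r) :
    genErr μ (surLoss nE L c (ellLog nE) h r) =
      ∫⁻ x, ENNReal.ofReal (SV nE (Vb nE L c μ.condKernel (h x) x) (r x)) ∂μ.fst := by
  have e : surLoss nE L c (ellLog nE) h r = fun z =>
      SV nE (Fin.cons (L (h z.1) z.2) (fun j => c j z)) (r z.1) :=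
    funext (surLoss_eq_SV nE L c h r)
  have hint := fun x i =>
    integrable_cons nE lbar C L c μ.condKernel (h x) x hLmeas hL hcmeas hc i
  rw [e, genErr_fiber]
  · refine lintegral_congr fun x => ?_
    congr 1
    simp only [SV_eq]
    rw [integral_add ((hint x 0).mul_const _)
      (integrable_finsetSum _ fun i _ => (hint x i.succ).mul_const _),
      integral_finsetSum _ fun i _ => (hint x i.succ).mul_const _]
    simp only [integral_mul_const, Vb_eq]
  · exact measurable_SV nE (measurable_cons nE L c hLmeas hcmeas h hh) (hr.comp measurable_fst)
  · exact fun z => SV_nonneg _ _ _ fun i => cons_nonneg' nE lbar C L c hL hc _ _ _ _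
  · intro x
    simp only [SV_eq]
    exact ((hint x 0).mul_const _).add
      (integrable_finsetSum _ fun i _ => (hint x i.succ).mul_const _)

lemma genErr_sur_zero (hLmeas : Measurable fun p : ℝ × ℝ => L p.1 p.2)
    (hL : ∀ y' y, L y' y ∈ Set.Icc 0 lbar)
    (hcmeas : ∀ j, Measurable (c j))
    (hc : ∀ j z, c j z ∈ Set.Ioc 0 (C j))
    (μ : Measure (X × ℝ)) [IsProbabilityMeasure μ]
    (h : X → ℝ) (hh : Measurable h) :
    genErr μ (surLoss nE L c (ellLog nE) h (fun _ _ => 0)) ≠ ∞ := by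
  rw [genErr_sur nE lbar C L c hLmeas hL hcmeas hc μ h hh _ measurable_const]
  set M := lbar + ∑ j, C j
  have hb : ∀ x, ∀ i, |Vb nE L c μ.condKernel (h x) x i| ≤ M := fun x i => by
    rw [abs_of_nonneg (Vb_nonneg nE lbar C L c _ hL hc _ _ _)]
    exact (Finset.single_le_sum (f := fun i => Vb nE L c μ.condKernel (h x) x i)
      (fun i _ => Vb_nonneg nE lbar C L c _ hL hc _ _ _) (Finset.mem_univ i)).trans
      (Vb_sum_le nE lbar C L c _ hLmeas hL hcmeas hc _ _)
  set a := (∑ j : Fin nE, ellLog nE (fun _ => 0) j.succ) - ((nE : ℝ) - 1)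
  set b := fun i : Fin nE => (∑ j, ellLog nE (fun _ => 0) j) - ellLog nE (fun _ => 0) i.succ
  have hle : ∀ x, SV nE (Vb nE L c μ.condKernel (h x) x) (fun _ => 0) ≤
      M * |a| + ∑ i, M * |b i| := by
    intro x
    rw [SV_eq]
    have aux : ∀ u w : ℝ, |u| ≤ M → u * w ≤ M * |w| := fun u w hu =>
      (le_abs_self _).trans (by rw [abs_mul]; gcongr)
    exact add_le_add (aux _ _ (hb x _)) (Finset.sum_le_sum fun i _ => aux _ _ (hb x _))
  refine ne_top_of_le_ne_top ?_ (lintegral_mono fun x => ENNReal.ofReal_le_ofReal (hle x))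
  simp

end fiber

lemma lintegral_sqrt_le {Y : Type*} [MeasurableSpace Y] (ν : Measure Y) [IsProbabilityMeasure ν]
    (f : Y → ℝ≥0∞) (hf : Measurable f) :
    ∫⁻ x, f x ^ ((1 : ℝ) / 2) ∂ν ≤ (∫⁻ x, f x ∂ν) ^ ((1 : ℝ) / 2) := by
  have := ENNReal.lintegral_mul_le_Lp_mul_Lq ν (p := 2) (q := 2) (by constructor <;> norm_num)
    (f := fun x => f x ^ ((1 : ℝ) / 2)) (g := fun _ => 1) (by fun_prop) (by fun_prop)
  have e : ∀ x, (f x ^ ((1 : ℝ) / 2)) ^ (2 : ℝ) = f x := fun x => by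
    rw [← ENNReal.rpow_mul]; norm_num
  simp only [e] at this
  simpa using this

/-- Corollary 3.3: excess error bound for the single-stage logistic
surrogate. -/
theorem single_stage_logistic_excess_error_bound {X : Type*} [MeasurableSpace X]
    (nE : ℕ) (hnE : 1 ≤ nE)
    (lbar : ℝ) (hlbar : 0 < lbar)
    (C : Fin nE → ℝ) (hC : ∀ j, 0 < C j)
    (L : ℝ → ℝ → ℝ) (hLmeas : Measurable fun p : ℝ × ℝ => L p.1 p.2)
    (hL : ∀ y' y, L y' y ∈ Set.Icc 0 lbar)
    (c : Fin nE → X × ℝ → ℝ) (hcmeas : ∀ j, Measurable (c j))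
    (hc : ∀ j z, c j z ∈ Set.Ioc 0 (C j))
    (sel : (Fin (nE + 1) → ℝ) → Fin (nE + 1)) (hselmeas : Measurable sel)
    (hsel : ∀ (s : Fin (nE + 1) → ℝ) (j : Fin (nE + 1)), s j ≤ s (sel s))
    (μ : Measure (X × ℝ)) [IsProbabilityMeasure μ]
    (h : X → ℝ) (hh : Measurable h)
    (r : X → Fin (nE + 1) → ℝ) (hr : Measurable r) :
    genErr μ (defLoss nE L c sel h r)
        - (⨅ (h' : X → ℝ) (_ : Measurable h') (r' : X → Fin (nE + 1) → ℝ)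
            (_ : Measurable r'), genErr μ (defLoss nE L c sel h' r'))
      ≤ max
          (genErr μ (surLoss nE L c (ellLog nE) h r)
            - ⨅ (h' : X → ℝ) (_ : Measurable h') (r' : X → Fin (nE + 1) → ℝ)
                (_ : Measurable r'), genErr μ (surLoss nE L c (ellLog nE) h' r'))
          (ENNReal.ofReal (Real.sqrt (2 * nE) * (lbar + ∑ j, C j) ^ ((1 : ℝ) / 2)) *
            (genErr μ (surLoss nE L c (ellLog nE) h r)
              - ⨅ (h' : X → ℝ) (_ : Measurable h') (r' : X → Fin (nE + 1) → ℝ)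
                  (_ : Measurable r'),
                    genErr μ (surLoss nE L c (ellLog nE) h' r')) ^ ((1 : ℝ) / 2)) := by
  refine le_trans ?_ (le_max_right _ _)
  set Es := genErr μ (surLoss nE L c (ellLog nE) h r) with hEs
  set I := ⨅ (h' : X → ℝ) (_ : Measurable h') (r' : X → Fin (nE + 1) → ℝ)
                (_ : Measurable r'), genErr μ (surLoss nE L c (ellLog nE) h' r') with hI
  have hIle : ∀ h' : X → ℝ, Measurable h' → ∀ r' : X → Fin (nE + 1) → ℝ, Measurable r' →
      I ≤ genErr μ (surLoss nE L c (ellLog nE) h' r') := fun h' hh' r' hr' =>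
    iInf_le_of_le h' (iInf_le_of_le hh' (iInf_le_of_le r' (iInf_le _ hr')))
  have hItop : I ≠ ∞ := ne_top_of_le_ne_top
    (genErr_sur_zero nE lbar C L c hLmeas hL hcmeas hc μ h hh)
    (hIle h hh (fun _ _ => 0) measurable_const)
  set M := lbar + ∑ j, C j with hM
  have hMpos : 0 < M := add_pos_of_pos_of_nonneg hlbar (Finset.sum_nonneg fun j _ => (hC j).le)
  have hK : Real.sqrt (2 * nE) * M ^ ((1 : ℝ) / 2) = Real.sqrt (2 * nE * M) := by
    rw [← Real.sqrt_eq_rpow, ← Real.sqrt_mul (by positivity)]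
  rw [hK]
  have hKpos : 0 < Real.sqrt (2 * nE * M) := by
    have : (1 : ℝ) ≤ nE := by exact_mod_cast hnE
    apply Real.sqrt_pos.2
    positivity
  by_cases hEtop : Es = ∞
  · rw [hEtop, ENNReal.top_sub hItop, ENNReal.top_rpow_of_pos (by norm_num), ENNReal.mul_top]
    · exact le_top
    · exact (ENNReal.ofReal_pos.2 hKpos).ne'
  rw [tsub_le_iff_left, ← tsub_le_iff_right]
  refine le_iInf fun h' => le_iInf fun hh' => le_iInf fun r' => le_iInf fun hr' => ?_
  rw [tsub_le_iff_right]
  set κ := μ.condKernel with hκ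
  set ν := μ.fst with hν
  have mV := measurable_Vb nE L c κ hLmeas hcmeas h hh
  have mV' := measurable_Vb nE L c κ hLmeas hcmeas h' hh'
  classical
  set P : X → Prop := fun x =>
    sel (r' x) = 0 ∧ Vb nE L c κ (h' x) x 0 < Vb nE L c κ (h x) x 0 with hP
  have mP : MeasurableSet {x | P x} :=
    ((hselmeas.comp hr') (measurableSet_singleton 0)).inter
      (measurableSet_lt ((measurable_pi_apply 0).comp mV') ((measurable_pi_apply 0).comp mV))
  set h'' : X → ℝ := fun x => if P x then h' x else h x with hh''def
  have hh'' : Measurable h'' := Measurable.ite mP hh' hh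
  have mV'' := measurable_Vb nE L c κ hLmeas hcmeas h'' hh''
  set r'' : X → Fin (nE + 1) → ℝ := fun x =>
    impS nE (Vb nE L c κ (h'' x) x) (r x) (sel (r x)) (sel (r' x)) with hr''def
  have hr'' : Measurable r'' :=
    measurable_impS nE mV'' hr (hselmeas.comp hr) (hselmeas.comp hr')
  set t : X → ℝ := fun x => SV nE (Vb nE L c κ (h x) x) (r x) -
    SV nE (Vb nE L c κ (h'' x) x) (r'' x) with ht
  have mt : Measurable t := (measurable_SV nE mV hr).sub (measurable_SV nE mV'' hr'')
  have hpt : ∀ x, 0 ≤ t x ∧ Vb nE L c κ (h x) x (sel (r x)) - Vb nE L c κ (h' x) x (sel (r' x))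
      ≤ Real.sqrt (2 * nE * M * t x) := by
    intro x
    refine pointwise_bound nE hnE _ _ _ _ (Vb_nonneg nE lbar C L c κ hL hc _ _)
      (Vb_nonneg nE lbar C L c κ hL hc _ _) (fun i => ?_) _ _ (hsel _) ?_ M
      (Vb_sum_le nE lbar C L c κ hLmeas hL hcmeas hc _ _)
      (Vb_sum_le nE lbar C L c κ hLmeas hL hcmeas hc _ _)
    · simp [Vb]
    · by_cases hx : P x
      · rw [if_pos hx]; simp only [hh''def, if_pos hx]
      · rw [if_neg hx]; simp only [hh''def, if_neg hx]
  have hEs2 := genErr_sur nE lbar C L c hLmeas hL hcmeas hc μ h hh r hr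
  have hEs3 := genErr_sur nE lbar C L c hLmeas hL hcmeas hc μ h'' hh'' r'' hr''
  rw [← hEs] at hEs2
  have hSV'' : ∀ x, 0 ≤ SV nE (Vb nE L c κ (h'' x) x) (r'' x) := fun x =>
    SV_nonneg _ _ _ (Vb_nonneg nE lbar C L c κ hL hc _ _)
  have hT : ∫⁻ x, ENNReal.ofReal (t x) ∂ν ≤ Es - I := by
    have h1 : ∫⁻ x, ENNReal.ofReal (t x) ∂ν +
        genErr μ (surLoss nE L c (ellLog nE) h'' r'') = Es := by
      rw [hEs2, hEs3, ← lintegral_add_left (by fun_prop)]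
      refine lintegral_congr fun x => ?_
      rw [← ENNReal.ofReal_add (hpt x).1 (hSV'' x)]
      simp only [ht, sub_add_cancel, hκ]
    apply ENNReal.le_sub_of_add_le_right hItop
    rw [← h1]
    exact add_le_add_right (hIle h'' hh'' r'' hr'') _
  rw [genErr_def nE lbar C L c hLmeas hL hcmeas hc sel hselmeas μ h hh r hr,
    genErr_def nE lbar C L c hLmeas hL hcmeas hc sel hselmeas μ h' hh' r' hr']
  calc ∫⁻ x, ENNReal.ofReal (Vb nE L c κ (h x) x (sel (r x))) ∂ν
      ≤ ∫⁻ x, (ENNReal.ofReal (Vb nE L c κ (h' x) x (sel (r' x))) +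
          ENNReal.ofReal (Real.sqrt (2 * nE * M)) * ENNReal.ofReal (t x) ^ ((1 : ℝ) / 2)) ∂ν := by
        refine lintegral_mono fun x => ?_
        rw [ENNReal.ofReal_rpow_of_nonneg (hpt x).1 (by norm_num),
          ← ENNReal.ofReal_mul (Real.sqrt_nonneg _), ← Real.sqrt_eq_rpow,
          ← Real.sqrt_mul (by positivity),
          ← ENNReal.ofReal_add (Vb_nonneg nE lbar C L c κ hL hc _ _ _) (Real.sqrt_nonneg _)]
        apply ENNReal.ofReal_le_ofReal
        linarith [(hpt x).2]
    _ = ∫⁻ x, ENNReal.ofReal (Vb nE L c κ (h' x) x (sel (r' x))) ∂ν +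
          ENNReal.ofReal (Real.sqrt (2 * nE * M)) *
            ∫⁻ x, ENNReal.ofReal (t x) ^ ((1 : ℝ) / 2) ∂ν := by
        rw [lintegral_add_left, lintegral_const_mul _ (by fun_prop)]
        exact (measurable_eval_fin mV' (hselmeas.comp hr')).ennreal_ofReal
    _ ≤ _ := by
        gcongr
        exact (lintegral_sqrt_le ν _ (by fun_prop)).trans (ENNReal.rpow_le_rpow hT (by norm_num))
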